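/- There exists a constant C > 0 depending only on n such that, for every abstract Monge–Ampère pairing setup (W, B, 𝟙, F) as in the context, every choice of reference element φ_ref ∈ F, and all φ, ψ ∈ F: I(φ, ψ) ≤ C · max{J(φ), J(ψ)}. -/

import Mathlib

open Finset

/-- Abstract Monge–Ampère pairing setup with `n = m + 1`: a symmetric multilinear
form `B` on `W^(n+1) = W^(m+2)`, a unit element `one`, and a nonempty convex set
`F ⊆ W`, satisfying (i) normalization `B(𝟙, φ₁, …, φₙ) = 1`, (ii) integration by
parts `B(u, 𝟙, g₂, …, gₙ) = 0` for `u ∈ W₀` and `gᵢ ∈ W' = span (F ∪ {𝟙})`, and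
(iii) the Cauchy–Schwarz / local Hodge index inequality
`B(u, u, φ₁, …, φ_{n-1}) ≤ 0` for `u ∈ W₀`. -/
structure MASetup (m : ℕ) (W : Type*) [AddCommGroup W] [Module ℝ W] where
  B : MultilinearMap ℝ (fun _ : Fin (m + 2) => W) ℝ
  symm : ∀ (v : Fin (m + 2) → W) (σ : Equiv.Perm (Fin (m + 2))), B (v ∘ σ) = B v
  one : W
  F : Set W
  Fne : F.Nonempty
  Fconv : Convex ℝ F
  unital : ∀ g : Fin (m + 1) → W, (∀ i, g i ∈ F) → B (Fin.cons one g) = 1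
  parts : ∀ u ∈ Submodule.span ℝ ({x | ∃ φ ∈ F, ∃ ψ ∈ F, x = φ - ψ} ∪ {one}),
      ∀ g : Fin m → W, (∀ i, g i ∈ Submodule.span ℝ (F ∪ {one})) →
        B (Fin.cons u (Fin.cons one g)) = 0
  hodge : ∀ u ∈ Submodule.span ℝ ({x | ∃ φ ∈ F, ∃ ψ ∈ F, x = φ - ψ} ∪ {one}),
      ∀ g : Fin m → W, (∀ i, g i ∈ F) → B (Fin.cons u (Fin.cons u g)) ≤ 0

namespace MASetup

variable {m : ℕ} {W : Type*} [AddCommGroup W] [Module ℝ W]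

/-- The vector with `j` copies of `φ` followed by copies of `ψ`. -/
def mixVec (φ ψ : W) (j : ℕ) {k : ℕ} : Fin k → W := fun i => if (i : ℕ) < j then φ else ψ

/-- The linear span `W₀` of the differences of elements of `F` together with `one`. -/
def W0 (S : MASetup m W) : Submodule ℝ W :=
  Submodule.span ℝ ({x | ∃ φ ∈ S.F, ∃ ψ ∈ S.F, x = φ - ψ} ∪ {S.one})

/-- The Monge–Ampère energy
`E(φ, ψ) = (n+1)⁻¹ ∑_{j=0}^{n} B(φ-ψ, φ, …, φ, ψ, …, ψ)` with `j` copies of `φ`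
and `n - j` copies of `ψ` among the last `n` arguments. -/
noncomputable def energy (S : MASetup m W) (φ ψ : W) : ℝ :=
  ((m : ℝ) + 2)⁻¹ * ∑ j ∈ Finset.range (m + 2), S.B (Fin.cons (φ - ψ) (mixVec φ ψ j))

/-- The functional `I(φ, ψ) = B(φ-ψ, ψ, …, ψ) - B(φ-ψ, φ, …, φ)`. -/
noncomputable def Ifun (S : MASetup m W) (φ ψ : W) : ℝ :=
  S.B (Fin.cons (φ - ψ) fun _ => ψ) - S.B (Fin.cons (φ - ψ) fun _ => φ)

/-- The functional `J_ψ(φ) = B(φ-ψ, ψ, …, ψ) - E(φ, ψ)`. -/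
noncomputable def Jfun (S : MASetup m W) (ψ φ : W) : ℝ :=
  S.B (Fin.cons (φ - ψ) fun _ => ψ) - S.energy φ ψ

end MASetup

namespace MASetup

theorem exists_perm_of_map_eq {k : ℕ} {W : Type*} (v w : Fin k → W)
    (h : (univ : Finset (Fin k)).val.map v = (univ : Finset (Fin k)).val.map w) :
    ∃ σ : Equiv.Perm (Fin k), v = w ∘ σ := by
  classical
  have hc : ∀ c, Nonempty ({a // v a = c} ≃ {a // w a = c}) := by
    intro c
    have h1 := congrArg (Multiset.count c) h
    rw [Multiset.count_map, Multiset.count_map] at h1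
    refine ⟨Fintype.equivOfCardEq ?_⟩
    rw [Fintype.card_subtype, Fintype.card_subtype]
    simpa [Finset.card, eq_comm] using h1
  refine ⟨Equiv.ofFiberEquiv (f := v) (g := w) (fun c => (hc c).some), ?_⟩
  funext a
  exact (Equiv.ofFiberEquiv_map _ a).symm

theorem exists_fn {W : Type*} (k : ℕ) (s : Multiset W) (h : Multiset.card s = k) :
    ∃ g : Fin k → W, (univ : Finset (Fin k)).val.map g = s := by
  induction s using Quotient.inductionOn with
  | h l =>
    have hl : l.length = k := by simpa using h
    subst hl
    refine ⟨fun i => l.get i, ?_⟩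
    simp

variable {m : ℕ} {W : Type*} [AddCommGroup W] [Module ℝ W]

theorem map_cons {k : ℕ} (a : W) (g : Fin k → W) :
    (univ : Finset (Fin (k + 1))).val.map (Fin.cons a g : Fin (k + 1) → W)
      = a ::ₘ (univ : Finset (Fin k)).val.map g := by
  simp [List.ofFn_succ]

/-- `B` as a function of a multiset. -/
noncomputable def P (S : MASetup m W) (s : Multiset W) : ℝ :=
  S.B (fun i => s.toList.getD i 0)

theorem P_eq (S : MASetup m W) (v : Fin (m + 2) → W) :
    S.B v = S.P ((univ : Finset (Fin (m + 2))).val.map v) := by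
  unfold P
  set s := (univ : Finset (Fin (m + 2))).val.map v with hs
  have hlen : s.toList.length = m + 2 := by simp [hs]
  obtain ⟨σ, hσ⟩ := exists_perm_of_map_eq (fun i : Fin (m+2) => s.toList.getD i 0) v (by
    rw [← hs]
    conv_rhs => rw [← Multiset.coe_toList s]
    rw [Fin.univ_val_map]
    congr 1
    apply List.ext_getElem
    · simp [hlen]
    · intro i h1 h2
      rw [List.getElem_ofFn]
      exact List.getD_eq_getElem _ _ h2)
  rw [hσ, S.symm]

theorem B_cons (S : MASetup m W) (a : W) (g : Fin (m + 1) → W) :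
    S.B (Fin.cons a g) = S.P (a ::ₘ (univ : Finset (Fin (m + 1))).val.map g) := by
  rw [P_eq, map_cons]

theorem P_add (S : MASetup m W) (x y : W) (s : Multiset W) (h : Multiset.card s = m + 1) :
    S.P ((x + y) ::ₘ s) = S.P (x ::ₘ s) + S.P (y ::ₘ s) := by
  obtain ⟨g, rfl⟩ := exists_fn _ s h
  simp only [← B_cons]
  exact S.B.cons_add g x y

theorem P_smul (S : MASetup m W) (c : ℝ) (x : W) (s : Multiset W) (h : Multiset.card s = m + 1) :
    S.P ((c • x) ::ₘ s) = c * S.P (x ::ₘ s) := by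
  obtain ⟨g, rfl⟩ := exists_fn _ s h
  simp only [← B_cons]
  exact S.B.cons_smul g c x

theorem P_sub (S : MASetup m W) (x y : W) (s : Multiset W) (h : Multiset.card s = m + 1) :
    S.P ((x - y) ::ₘ s) = S.P (x ::ₘ s) - S.P (y ::ₘ s) := by
  have := S.P_add (x - y) y s h
  rw [sub_add_cancel] at this
  linarith

/-- The positive semidefinite form `-B(x, y, s)`. -/
noncomputable def Q (S : MASetup m W) (x y : W) (s : Multiset W) : ℝ := - S.P (x ::ₘ y ::ₘ s)

theorem Q_comm (S : MASetup m W) (x y : W) (s : Multiset W) : S.Q x y s = S.Q y x s := by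
  unfold Q; rw [Multiset.cons_swap]

theorem Q_nonneg (S : MASetup m W) (x : W) (hx : x ∈ S.W0) (s : Multiset W)
    (h : Multiset.card s = m) (hs : ∀ y ∈ s, y ∈ S.F) : 0 ≤ S.Q x x s := by
  obtain ⟨g, rfl⟩ := exists_fn _ s h
  have := S.hodge x hx g (fun i => hs _ (by simp))
  rw [B_cons, map_cons] at this
  unfold Q
  linarith

theorem Q_lin (S : MASetup m W) (c : ℝ) (x x' y : W) (s : Multiset W) (h : Multiset.card s = m) :
    S.Q (c • x + x') y s = c * S.Q x y s + S.Q x' y s := by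
  unfold Q
  rw [P_add _ _ _ _ (by simp [h]), P_smul _ _ _ _ (by simp [h])]
  ring

theorem Q_quad (S : MASetup m W) (c : ℝ) (x y : W) (s : Multiset W) (h : Multiset.card s = m) :
    S.Q (c • x + y) (c • x + y) s = c ^ 2 * S.Q x x s + 2 * c * S.Q x y s + S.Q y y s := by
  rw [Q_lin _ _ _ _ _ _ h, Q_comm S x, Q_comm S y (c • x + y), Q_lin _ _ _ _ _ _ h,
    Q_lin _ _ _ _ _ _ h, Q_comm S y x]
  ring

theorem sub_mem_W0 (S : MASetup m W) {x y : W} (hx : x ∈ S.F) (hy : y ∈ S.F) :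
    x - y ∈ S.W0 :=
  Submodule.subset_span (Or.inl ⟨x, hx, y, hy, rfl⟩)

theorem Q_cauchy (S : MASetup m W) (x y : W) (hx : x ∈ S.W0) (hy : y ∈ S.W0) (s : Multiset W)
    (h : Multiset.card s = m) (hs : ∀ y ∈ s, y ∈ S.F) (c : ℝ) :
    |2 * c * S.Q x y s| ≤ c ^ 2 * S.Q x x s + S.Q y y s := by
  have h1 := S.Q_nonneg (c • x + y) (S.W0.add_mem (S.W0.smul_mem _ hx) hy) s h hs
  have h2 := S.Q_nonneg ((-c) • x + y) (S.W0.add_mem (S.W0.smul_mem _ hx) hy) s h hs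
  rw [Q_quad _ _ _ _ _ h] at h1 h2
  rw [abs_le]
  constructor <;> nlinarith

/-- Three-term exchange identity. -/
theorem Q_exchange (S : MASetup m W) (φ ψ χ : W) (s : Multiset W)
    (h : Multiset.card s + 1 = m) :
    S.Q (φ - χ) (φ - χ) (ψ ::ₘ s) = S.Q (φ - χ) (φ - χ) (χ ::ₘ s)
      + S.Q (φ - χ) (ψ - χ) (φ ::ₘ s) - S.Q (φ - χ) (ψ - χ) (χ ::ₘ s) := by
  have rot : ∀ x y z : W, S.Q x y (z ::ₘ s) = - S.P (z ::ₘ x ::ₘ y ::ₘ s) := by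
    intro x y z
    unfold Q
    rw [Multiset.cons_swap y z, Multiset.cons_swap x z]
  have e1 := S.P_sub ψ χ ((φ - χ) ::ₘ (φ - χ) ::ₘ s) (by simp; omega)
  have e2 := S.P_sub φ χ ((φ - χ) ::ₘ (ψ - χ) ::ₘ s) (by simp; omega)
  have e3 : S.P ((ψ - χ) ::ₘ (φ - χ) ::ₘ (φ - χ) ::ₘ s)
      = S.P ((φ - χ) ::ₘ (φ - χ) ::ₘ (ψ - χ) ::ₘ s) := by
    rw [Multiset.cons_swap (ψ - χ), Multiset.cons_swap (ψ - χ)]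
  simp only [rot]
  linarith

/-- `a` copies of `φ`, `b` of `χ`, `c` of `ψ`. -/
def T (φ χ ψ : W) (a b c : ℕ) : Multiset W :=
  Multiset.replicate a φ + Multiset.replicate b χ + Multiset.replicate c ψ

theorem T_card (φ χ ψ : W) (a b c : ℕ) : Multiset.card (T φ χ ψ a b c) = a + b + c := by
  simp [T]

theorem T_mem (S : MASetup m W) {φ χ ψ : W} (hφ : φ ∈ S.F) (hχ : χ ∈ S.F) (hψ : ψ ∈ S.F)
    (a b c : ℕ) : ∀ y ∈ T φ χ ψ a b c, y ∈ S.F := by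
  intro y hy
  simp only [T, Multiset.mem_add, Multiset.mem_replicate] at hy
  rcases hy with (⟨_, rfl⟩ | ⟨_, rfl⟩) | ⟨_, rfl⟩ <;> assumption

theorem T_succ1 (φ χ ψ : W) (a b c : ℕ) : T φ χ ψ (a + 1) b c = φ ::ₘ T φ χ ψ a b c := by
  simp [T, Multiset.replicate_succ]

theorem T_succ2 (φ χ ψ : W) (a b c : ℕ) : T φ χ ψ a (b + 1) c = χ ::ₘ T φ χ ψ a b c := by
  simp [T, Multiset.replicate_succ]

theorem T_succ3 (φ χ ψ : W) (a b c : ℕ) : T φ χ ψ a b (c + 1) = ψ ::ₘ T φ χ ψ a b c := by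
  simp [T, Multiset.replicate_succ]

theorem T_swap (φ χ ψ : W) (a b c : ℕ) : T φ χ ψ a b c = T ψ χ φ c b a := by
  unfold T; abel

theorem step (S : MASetup m W) {φ χ ψ : W} (hφ : φ ∈ S.F) (hχ : χ ∈ S.F) (hψ : ψ ∈ S.F)
    (a b c : ℕ) (h : a + b + (c + 1) = m) (δ X : ℝ) (hδ : 0 < δ)
    (hX : ∀ a b c, a + b + c = m → S.Q (ψ - χ) (ψ - χ) (T φ χ ψ a b c) ≤ X) :
    S.Q (φ - χ) (φ - χ) (T φ χ ψ a b (c + 1)) ≤ S.Q (φ - χ) (φ - χ) (T φ χ ψ a (b + 1) c)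
      + δ⁻¹ * S.Q (φ - χ) (φ - χ) (T φ χ ψ (a + 1) b c)
      + δ⁻¹ * S.Q (φ - χ) (φ - χ) (T φ χ ψ a (b + 1) c) + δ * X := by
  have ex := S.Q_exchange φ ψ χ (T φ χ ψ a b c) (by rw [T_card]; omega)
  rw [← T_succ1, ← T_succ2, ← T_succ3] at ex
  have c1 := S.Q_cauchy (φ - χ) (ψ - χ) (S.sub_mem_W0 hφ hχ) (S.sub_mem_W0 hψ hχ)
    (T φ χ ψ (a + 1) b c) (by rw [T_card]; omega) (S.T_mem hφ hχ hψ _ _ _) δ⁻¹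
  have c2 := S.Q_cauchy (φ - χ) (ψ - χ) (S.sub_mem_W0 hφ hχ) (S.sub_mem_W0 hψ hχ)
    (T φ χ ψ a (b + 1) c) (by rw [T_card]; omega) (S.T_mem hφ hχ hψ _ _ _) δ⁻¹
  have n1 := S.Q_nonneg (φ - χ) (S.sub_mem_W0 hφ hχ)
    (T φ χ ψ (a + 1) b c) (by rw [T_card]; omega) (S.T_mem hφ hχ hψ _ _ _)
  have n2 := S.Q_nonneg (φ - χ) (S.sub_mem_W0 hφ hχ)
    (T φ χ ψ a (b + 1) c) (by rw [T_card]; omega) (S.T_mem hφ hχ hψ _ _ _)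
  have x1 := hX (a + 1) b c (by omega)
  have x2 := hX a (b + 1) c (by omega)
  have d1 := (abs_le.1 c1).2
  have d2 := (abs_le.1 c2).1
  have hi : 0 < δ⁻¹ := inv_pos.2 hδ
  have hm : δ * δ⁻¹ = 1 := mul_inv_cancel₀ hδ.ne'
  rw [ex]
  generalize S.Q (φ - χ) (ψ - χ) (T φ χ ψ (a + 1) b c) = q1 at *
  generalize S.Q (φ - χ) (ψ - χ) (T φ χ ψ a (b + 1) c) = q2 at *
  generalize S.Q (φ - χ) (φ - χ) (T φ χ ψ (a + 1) b c) = p1 at *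
  generalize S.Q (φ - χ) (φ - χ) (T φ χ ψ a (b + 1) c) = p2 at *
  generalize S.Q (ψ - χ) (ψ - χ) (T φ χ ψ (a + 1) b c) = r1 at *
  generalize S.Q (ψ - χ) (ψ - χ) (T φ χ ψ a (b + 1) c) = r2 at *
  generalize δ⁻¹ = ε at *
  have f1 := mul_le_mul_of_nonneg_left (d1.trans (add_le_add_right x1 _)) hδ.le
  have f2 := mul_le_mul_of_nonneg_left (d2.trans' (neg_le_neg (add_le_add_right x2 _))) hδ.le
  have g1 : δ * (2 * ε * q1) = 2 * q1 := by linear_combination 2 * q1 * hm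
  have g2 : δ * (2 * ε * q2) = 2 * q2 := by linear_combination 2 * q2 * hm
  have g3 : δ * (ε ^ 2 * p1 + X) = ε * p1 + δ * X := by linear_combination ε * p1 * hm
  have g4 : δ * -(ε ^ 2 * p2 + X) = - (ε * p2 + δ * X) := by linear_combination -ε * p2 * hm
  rw [g1, g3] at f1
  rw [g2, g4] at f2
  have := mul_nonneg hi.le n1
  have := mul_nonneg hi.le n2
  linarith

/-- The abstract iteration. -/
theorem iterate (m : ℕ) (c : ℕ) : ∀ δ : ℝ, 0 < δ → ∃ K : ℝ, 0 ≤ K ∧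
    ∀ (A : ℕ → ℕ → ℕ → ℝ) (M X : ℝ),
      (∀ a b, a + b = m → A a b 0 ≤ M) → 0 ≤ X →
      (∀ a b c, a + b + (c + 1) = m → ∀ δ : ℝ, 0 < δ →
        A a b (c + 1) ≤ A a (b + 1) c + δ⁻¹ * A (a + 1) b c + δ⁻¹ * A a (b + 1) c + δ * X) →
      ∀ a b, a + b + c = m → A a b c ≤ K * M + δ * X := by
  induction c with
  | zero =>
    intro δ hδ
    refine ⟨1, zero_le_one, fun A M X h0 hX _ a b hab => ?_⟩
    have := h0 a b (by omega)
    have := mul_nonneg hδ.le hX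
    linarith
  | succ c ih =>
    intro δ hδ
    set L : ℝ := 1 + 2 * (δ / 2)⁻¹ with hL
    have hi : 0 < (δ / 2)⁻¹ := by positivity
    have hLpos : 0 < L := by positivity
    obtain ⟨K, hK, H⟩ := ih (δ / 2 / L) (by positivity)
    refine ⟨L * K, by positivity, fun A M X h0 hX hs a b hab => ?_⟩
    have e1 := H A M X h0 hX hs a (b + 1) (by omega)
    have e2 := H A M X h0 hX hs (a + 1) b (by omega)
    have e3 := hs a b c hab (δ / 2) (by positivity)
    have f1 := mul_le_mul_of_nonneg_left e1 hi.le
    have f2 := mul_le_mul_of_nonneg_left e2 hi.le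
    have key : L * (K * M + δ / 2 / L * X) = L * K * M + δ / 2 * X := by
      field_simp
    have : L * (K * M + δ / 2 / L * X) = (K * M + δ / 2 / L * X)
      + (δ / 2)⁻¹ * (K * M + δ / 2 / L * X) + (δ / 2)⁻¹ * (K * M + δ / 2 / L * X) := by
      rw [hL]; ring
    linarith

theorem map_mixVec (φ ψ : W) (k j : ℕ) (h : j ≤ k) :
    (univ : Finset (Fin k)).val.map (mixVec φ ψ j) =
      Multiset.replicate j φ + Multiset.replicate (k - j) ψ := by
  induction k generalizing j with
  | zero => obtain rfl : j = 0 := by omega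
            simp
  | succ k ih =>
    cases j with
    | zero =>
      have : (mixVec φ ψ 0 : Fin (k + 1) → W) = fun _ => ψ := by funext i; simp [mixVec]
      rw [this]
      simp
    | succ j =>
      have : (mixVec φ ψ (j + 1) : Fin (k + 1) → W) = Fin.cons φ (mixVec φ ψ j) := by
        funext i
        refine Fin.cases ?_ (fun i => ?_) i <;> simp [mixVec]
      rw [this, map_cons, ih j (by omega), Multiset.replicate_succ, Multiset.cons_add,
        Nat.add_sub_add_right]

/-- The terms of the energy. -/
noncomputable def D (S : MASetup m W) (φ ψ : W) (j : ℕ) : ℝ :=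
  S.B (Fin.cons (φ - ψ) (mixVec φ ψ j))

theorem D_eq (S : MASetup m W) (φ ψ : W) (j : ℕ) (h : j ≤ m + 1) :
    S.D φ ψ j = S.P ((φ - ψ) ::ₘ (Multiset.replicate j φ + Multiset.replicate (m + 1 - j) ψ)) := by
  rw [D, B_cons, map_mixVec _ _ _ _ h]

theorem D_sub (S : MASetup m W) (φ ψ : W) (j : ℕ) (h : j ≤ m) :
    S.D φ ψ j - S.D φ ψ (j + 1) =
      S.Q (φ - ψ) (φ - ψ) (Multiset.replicate j φ + Multiset.replicate (m - j) ψ) := by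
  rw [D_eq _ _ _ _ (by omega), D_eq _ _ _ _ (by omega)]
  set s := Multiset.replicate j φ + Multiset.replicate (m - j) ψ with hs
  have e1 : Multiset.replicate j φ + Multiset.replicate (m + 1 - j) ψ = ψ ::ₘ s := by
    rw [show m + 1 - j = (m - j) + 1 by omega, Multiset.replicate_succ, Multiset.add_cons]
  have e2 : Multiset.replicate (j + 1) φ + Multiset.replicate (m + 1 - (j + 1)) ψ = φ ::ₘ s := by
    rw [Nat.add_sub_add_right, Multiset.replicate_succ, Multiset.cons_add]
  have hc : Multiset.card s = m := by simp [hs]; omega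
  rw [e1, e2, Q]
  have := S.P_sub φ ψ ((φ - ψ) ::ₘ s) (by simp [hc])
  rw [Multiset.cons_swap φ, Multiset.cons_swap ψ] at this
  linarith

theorem Ifun_eq (S : MASetup m W) (φ ψ : W) : S.Ifun φ ψ = S.D φ ψ 0 - S.D φ ψ (m + 1) := by
  unfold Ifun D
  have h1 : (mixVec φ ψ 0 : Fin (m + 1) → W) = fun _ => ψ := by funext i; simp [mixVec]
  have h2 : (mixVec φ ψ (m + 1) : Fin (m + 1) → W) = fun _ => φ := by
    funext i; simp only [mixVec]; rw [if_pos i.2]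
  rw [h1, h2]

theorem Ifun_sum (S : MASetup m W) (φ ψ : W) : S.Ifun φ ψ = ∑ j ∈ range (m + 1),
    S.Q (φ - ψ) (φ - ψ) (Multiset.replicate j φ + Multiset.replicate (m - j) ψ) := by
  rw [Ifun_eq, ← Finset.sum_range_sub']
  refine Finset.sum_congr rfl fun j hj => ?_
  rw [D_sub]
  have := Finset.mem_range.1 hj
  omega

theorem term_nonneg (S : MASetup m W) {φ ψ : W} (hφ : φ ∈ S.F) (hψ : ψ ∈ S.F) (j : ℕ)
    (hj : j ≤ m) :
    0 ≤ S.Q (φ - ψ) (φ - ψ) (Multiset.replicate j φ + Multiset.replicate (m - j) ψ) := by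
  refine S.Q_nonneg _ (S.sub_mem_W0 hφ hψ) _ (by simp; omega) ?_
  intro y hy
  simp only [Multiset.mem_add, Multiset.mem_replicate] at hy
  rcases hy with ⟨_, rfl⟩ | ⟨_, rfl⟩ <;> assumption

theorem D_le (S : MASetup m W) {φ ψ : W} (hφ : φ ∈ S.F) (hψ : ψ ∈ S.F) (j : ℕ)
    (hj : j ≤ m + 1) : S.D φ ψ j ≤ S.D φ ψ 0 := by
  induction j with
  | zero => exact le_rfl
  | succ j ih =>
    have := ih (by omega)
    have h1 := S.D_sub φ ψ j (by omega)
    have h2 := S.term_nonneg hφ hψ j (by omega)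
    linarith

theorem Ifun_le_Jfun (S : MASetup m W) {φ ψ : W} (hφ : φ ∈ S.F) (hψ : ψ ∈ S.F) :
    S.Ifun φ ψ ≤ (m + 2) * S.Jfun ψ φ := by
  have h1 : (mixVec φ ψ 0 : Fin (m + 1) → W) = fun _ => ψ := by funext i; simp [mixVec]
  have hJ : (m + 2) * S.Jfun ψ φ = ∑ j ∈ range (m + 2), (S.D φ ψ 0 - S.D φ ψ j) := by
    rw [Finset.sum_sub_distrib, Finset.sum_const, Finset.card_range]
    unfold Jfun energy D
    rw [h1]
    have : (m : ℝ) + 2 ≠ 0 := by positivity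
    push_cast
    rw [nsmul_eq_mul]
    push_cast
    field_simp
  rw [hJ, Ifun_eq]
  refine Finset.single_le_sum (f := fun j => S.D φ ψ 0 - S.D φ ψ j) (fun j hj => ?_)
    (Finset.mem_range.2 (by omega))
  have := S.D_le hφ hψ j (by have := Finset.mem_range.1 hj; omega)
  linarith

theorem base (S : MASetup m W) {φ ψ : W} (χ : W) (hφ : φ ∈ S.F) (hψ : ψ ∈ S.F) (a b : ℕ)
    (h : a + b = m) :
    S.Q (φ - ψ) (φ - ψ) (T φ ψ χ a b 0) ≤ (m + 2) * S.Jfun ψ φ := by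
  refine le_trans ?_ (S.Ifun_le_Jfun hφ hψ)
  rw [Ifun_sum]
  have := Finset.single_le_sum
    (f := fun j => S.Q (φ - ψ) (φ - ψ) (Multiset.replicate j φ + Multiset.replicate (m - j) ψ))
    (s := range (m + 1)) (a := a)
    (fun j hj => S.term_nonneg hφ hψ j (by have := Finset.mem_range.1 hj; omega))
    (Finset.mem_range.2 (by omega))
  obtain rfl : b = m - a := by omega
  simpa [T] using this

/-- One-sided bound. -/
theorem bound (m : ℕ) : ∃ K : ℝ, 0 ≤ K ∧ ∀ (W : Type*) [AddCommGroup W] [Module ℝ W]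
    (S : MASetup m W) (φ χ ψ : W), φ ∈ S.F → χ ∈ S.F → ψ ∈ S.F → ∀ M X : ℝ,
    (m + 2) * S.Jfun χ φ ≤ M → 0 ≤ M → 0 ≤ X →
    (∀ a b c, a + b + c = m → S.Q (ψ - χ) (ψ - χ) (T φ χ ψ a b c) ≤ X) →
    ∀ a b c, a + b + c = m → S.Q (φ - χ) (φ - χ) (T φ χ ψ a b c) ≤ K * M + 1 / 2 * X := by
  have H := fun c => iterate m c (1 / 2) (by norm_num)
  choose K hK H using H
  refine ⟨∑ c ∈ range (m + 1), K c, Finset.sum_nonneg fun c _ => hK c, ?_⟩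
  intro W _ _ S φ χ ψ hφ hχ hψ M X hM hM0 hX0 hX a b c habc
  have h1 := H c (fun a b c => S.Q (φ - χ) (φ - χ) (T φ χ ψ a b c)) M X
    (fun a b hab => (S.base ψ hφ hχ a b hab).trans hM) hX0
    (fun a b c h δ hδ => S.step hφ hχ hψ a b c h δ X hδ hX) a b habc
  have h2 : K c ≤ ∑ c ∈ range (m + 1), K c :=
    Finset.single_le_sum (fun c _ => hK c) (Finset.mem_range.2 (by omega))
  have h3 := mul_le_mul_of_nonneg_right h2 hM0
  linarith

theorem exists_max (m : ℕ) (f : ℕ → ℕ → ℕ → ℝ) : ∃ a b c, a + b + c = m ∧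
    ∀ a' b' c', a' + b' + c' = m → f a' b' c' ≤ f a b c := by
  obtain ⟨x, hx, h⟩ := Finset.exists_max_image
    ((range (m + 1) ×ˢ range (m + 1) ×ˢ range (m + 1)).filter
      (fun x : ℕ × ℕ × ℕ => x.1 + x.2.1 + x.2.2 = m)) (fun x => f x.1 x.2.1 x.2.2)
    ⟨(m, 0, 0), by simp⟩
  refine ⟨x.1, x.2.1, x.2.2, (Finset.mem_filter.1 hx).2, fun a b c habc => ?_⟩
  refine h (a, b, c) ?_
  simp only [Finset.mem_filter, Finset.mem_product, Finset.mem_range]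
  omega

end MASetup

/-- there is `C > 0` depending only on `n = m + 1` such that for
every setup, every reference `φ_ref ∈ F`, and all `φ, ψ ∈ F`:
`I(φ, ψ) ≤ C max{J(φ), J(ψ)}`, where `J(φ) = J_{φ_ref}(φ)`. -/
theorem Ifun_le_max_Jfun (m : ℕ) :
    ∃ C : ℝ, 0 < C ∧
      ∀ (W : Type*) [AddCommGroup W] [Module ℝ W] (S : MASetup m W),
        ∀ φref ∈ S.F, ∀ φ ∈ S.F, ∀ ψ ∈ S.F,
          S.Ifun φ ψ ≤ C * max (S.Jfun φref φ) (S.Jfun φref ψ) := by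
  obtain ⟨K, hK, H⟩ := MASetup.bound m
  refine ⟨(m + 1) * (8 * K * (m + 2)) + 1, by positivity, ?_⟩
  intro W _ _ S χ hχ φ hφ ψ hψ
  set N := max (S.Jfun χ φ) (S.Jfun χ ψ) with hN
  have hm2 : (0 : ℝ) < m + 2 := by positivity
  have hN0 : 0 ≤ N := by
    have h1 := S.Ifun_le_Jfun hφ hχ
    rw [S.Ifun_sum] at h1
    have h2 := Finset.sum_nonneg (s := range (m + 1))
      (fun j hj => S.term_nonneg hφ hχ j (by have := Finset.mem_range.1 hj; omega))
    have h3 : 0 ≤ S.Jfun χ φ := nonneg_of_mul_nonneg_right (h2.trans h1) hm2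
    exact h3.trans (le_max_left _ _)
  have hM0 : 0 ≤ ((m : ℝ) + 2) * N := by positivity
  obtain ⟨a, b, c, habc, hmax⟩ := MASetup.exists_max m (fun a b c =>
    max (S.Q (φ - χ) (φ - χ) (MASetup.T φ χ ψ a b c)) (S.Q (ψ - χ) (ψ - χ) (MASetup.T φ χ ψ a b c)))
  set X := max (S.Q (φ - χ) (φ - χ) (MASetup.T φ χ ψ a b c))
    (S.Q (ψ - χ) (ψ - χ) (MASetup.T φ χ ψ a b c)) with hX
  have hX0 : 0 ≤ X := le_max_of_le_left (S.Q_nonneg _ (S.sub_mem_W0 hφ hχ) _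
    (by rw [MASetup.T_card]; exact habc) (S.T_mem hφ hχ hψ _ _ _))
  have hA : ∀ a b c, a + b + c = m → S.Q (φ - χ) (φ - χ) (MASetup.T φ χ ψ a b c) ≤ X :=
    fun a b c h => (le_max_left _ _).trans (hmax a b c h)
  have hB : ∀ a b c, a + b + c = m → S.Q (ψ - χ) (ψ - χ) (MASetup.T φ χ ψ a b c) ≤ X :=
    fun a b c h => (le_max_right _ _).trans (hmax a b c h)
  have b1 := H W S φ χ ψ hφ hχ hψ ((m + 2) * N) X
    (mul_le_mul_of_nonneg_left (le_max_left _ _) hm2.le) hM0 hX0 hB a b c habc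
  have b2 := H W S ψ χ φ hψ hχ hφ ((m + 2) * N) X
    (mul_le_mul_of_nonneg_left (le_max_right _ _) hm2.le) hM0 hX0
    (fun a b c h => by rw [MASetup.T_swap]; exact hA c b a (by omega)) c b a (by omega)
  rw [MASetup.T_swap] at b2
  have hXle : X ≤ 2 * K * ((m + 2) * N) := by
    have : X ≤ K * ((m + 2) * N) + 1 / 2 * X := max_le b1 b2
    linarith
  rw [S.Ifun_sum]
  have hterm : ∀ j ∈ range (m + 1), S.Q (φ - ψ) (φ - ψ)
      (Multiset.replicate j φ + Multiset.replicate (m - j) ψ) ≤ 8 * K * ((m + 2) * N) := by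
    intro j hj
    have hj' := Finset.mem_range.1 hj
    have hT : Multiset.replicate j φ + Multiset.replicate (m - j) ψ
        = MASetup.T φ χ ψ j 0 (m - j) := by simp [MASetup.T]
    have hc : Multiset.card (MASetup.T φ χ ψ j 0 (m - j)) = m := by
      rw [MASetup.T_card]; omega
    rw [hT]
    have q1 := S.Q_quad (-1) (ψ - χ) (φ - χ) _ hc
    have q2 := S.Q_cauchy (ψ - χ) (φ - χ) (S.sub_mem_W0 hψ hχ) (S.sub_mem_W0 hφ hχ) _ hc
      (S.T_mem hφ hχ hψ _ _ _) (-1)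
    have e : (-1 : ℝ) • (ψ - χ) + (φ - χ) = φ - ψ := by
      rw [neg_one_smul]; abel
    rw [e] at q1
    have q3 := (abs_le.1 q2).2
    have a1 := hA j 0 (m - j) (by omega)
    have a2 := hB j 0 (m - j) (by omega)
    linarith
  have hs := Finset.sum_le_sum hterm
  rw [Finset.sum_const, Finset.card_range, nsmul_eq_mul] at hs
  push_cast at hs
  refine hs.trans ?_
  nlinarith
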